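/- arXiv:2103.00090 — 5 statements merged into one kernel-verified Lean document; each statement's English description precedes it below -/
import Mathlib

section
/- For any type V with a binary relation ∈ on V, if x is an upper and y is a successor of x, then x and y are coextensive. -/
theorem upper_coextensive_succ {V : Type*} (mem : V → V → Prop) (x y : V)
    (hx : ∀ z, ¬ mem z z → mem z x)
    (hy : ∀ z, mem z y ↔ (mem z x ∨ z = x)) :
    ∀ z, mem z y ↔ mem z x := by
  have hxx : mem x x := by
    by_contra h
    exact h (hx x h)
  intro z
  rw [hy z]
  constructor
  · rintro (h | rfl)
    · exact h
    · exact hxx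
  · exact Or.inl
end

section
/- For any type V with a binary relation ∈ on V, if x is an upper and y is a predecessor of x, then y is an upper. -/
theorem upper_pred_upper {V : Type*} (mem : V → V → Prop) (x y : V)
    (hx : ∀ z, ¬ mem z z → mem z x)
    (hy : ∀ z, mem z y ↔ (mem z x ∧ z ≠ x)) :
    ∀ z, ¬ mem z z → mem z y := by
  intro z hz
  refine (hy z).2 ⟨hx z hz, ?_⟩
  intro h
  subst h
  exact hz (hx z hz)
end

section
/- For any type V with a binary relation ∈ on V, if x is a lower and y is a successor of x, then x and y constitute a lower ascending link: x ∈ y, x ≠ y, and both x and y are lowers. -/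
theorem lower_ascending_link {V : Type*} (mem : V → V → Prop) (x y : V)
    (hx : ∀ z, mem z x → ¬ mem z z)
    (hy : ∀ z, mem z y ↔ (mem z x ∨ z = x)) :
    mem x y ∧ x ≠ y ∧ (∀ z, mem z x → ¬ mem z z) ∧ (∀ z, mem z y → ¬ mem z z) := by
  have hxx : ¬ mem x x := fun h => hx x h h
  have hxy : mem x y := (hy x).2 (Or.inr rfl)
  refine ⟨hxy, ?_, hx, ?_⟩
  · intro h
    rw [← h] at hxy
    exact hxx hxy
  · intro z hz
    rcases (hy z).1 hz with h | h
    · exact hx z h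
    · rw [h]
      exact hxx
end

section
/- For any type V with a binary relation ∈ on V, if x is an upper and y is a predecessor of x, then x and y constitute an upper descending link: y ∈ x, x ≠ y, and both x and y are uppers. -/
theorem upper_descending_link {V : Type*} (mem : V → V → Prop) (x y : V)
    (hx : ∀ z, ¬ mem z z → mem z x)
    (hy : ∀ z, mem z y ↔ (mem z x ∧ z ≠ x)) :
    mem y x ∧ x ≠ y ∧ (∀ z, ¬ mem z z → mem z x) ∧ (∀ z, ¬ mem z z → mem z y) := by
  have hxx : mem x x := by
    by_contra h
    exact h (hx x h)
  have hxy : ¬ mem x y := fun h => ((hy x).1 h).2 rfl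
  refine ⟨?_, ?_, hx, ?_⟩
  · by_cases h : mem y y
    · exact ((hy y).1 h).1
    · exact hx y h
  · intro h
    apply hxy
    rw [← h]
    exact hxx
  · intro z hz
    refine (hy z).2 ⟨hx z hz, ?_⟩
    intro h
    apply hz
    rw [h]
    exact hxx
end

section
/- For any type V with a binary relation ∈ on V, if x is an upper and p is a predecessor of x, then x ∈ x and p ∈ p; i.e., the implication 'x ∈ x implies the predecessor of x is self-membered' holds for any upper. -/
theorem upper_pred_self_mem {V : Type*} (mem : V → V → Prop) (x p : V)
    (hx : ∀ z, ¬ mem z z → mem z x)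
    (hp : ∀ z, mem z p ↔ (mem z x ∧ z ≠ x)) :
    mem x x ∧ mem p p := by
  have h : mem x x := by
    by_contra h
    exact h (hx x h)
  refine ⟨h, ?_⟩
  by_contra hn
  refine hn ((hp p).2 ⟨hx p hn, ?_⟩)
  intro e
  rw [e] at hn
  exact hn h
end
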